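/- arXiv:1605.04934 — 3 statements merged into one kernel-verified Lean document; each statement's English description precedes it below -/
import Mathlib

section
/- Let K ≥ 2 be an integer, let k ∈ {1, …, K}, and let θ = (θ_1, …, θ_K) and θ' = (θ'_1, …, θ'_K) be sorted probability vectors such that θ_1 > θ'_1, θ_k = θ'_k > 0, and θ_{k + 1[k ≠ K]} = θ'_{k + 1[k ≠ K]}. Then the inequality is strict: I_I(θ, k) < I_I(θ', k). -/
open Finset

/-- The interpretability indicator `I_I(θ, k)` for `K` categories, with 1-based
indexing of the sorted proportion `θ`. When `k = K` the second ratio is `θ K / θ K`. -/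
noncomputable def II (K : ℕ) (θ : ℕ → ℝ) (k : ℕ) : ℝ :=
  (1 / 2 : ℝ) * (((K : ℝ) - (k : ℝ)) / ((K : ℝ) - 1) + (if k = K then (1 : ℝ) else 0)) *
    (θ k / θ 1 - θ (k + (if k = K then 0 else 1)) / θ k + 1)

/-- `θ 1 ≥ θ 2 ≥ ⋯ ≥ θ K ≥ 0` and `θ 1 + ⋯ + θ K = 1`. -/
def SortedProbVec (K : ℕ) (θ : ℕ → ℝ) : Prop :=
  (∀ i j, 1 ≤ i → i ≤ j → j ≤ K → θ j ≤ θ i) ∧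
  (∀ i, 1 ≤ i → i ≤ K → 0 ≤ θ i) ∧
  (∑ i ∈ Finset.Icc 1 K, θ i = 1)

theorem II_strict_antitone_in_top (K : ℕ) (hK : 2 ≤ K) (k : ℕ) (hk1 : 1 ≤ k) (hkK : k ≤ K)
    (θ θ' : ℕ → ℝ) (hθ : SortedProbVec K θ) (hθ' : SortedProbVec K θ')
    (h1 : θ' 1 < θ 1) (hk : θ k = θ' k) (hkpos : 0 < θ k)
    (hnext : θ (k + (if k = K then 0 else 1)) = θ' (k + (if k = K then 0 else 1))) :
    II K θ k < II K θ' k := by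
  have hpos' : 0 < θ' 1 := lt_of_lt_of_le (hk ▸ hkpos) (hθ'.1 1 k le_rfl hk1 hkK)
  have hdiv : θ' k / θ 1 < θ' k / θ' 1 :=
    div_lt_div_of_pos_left (hk ▸ hkpos) hpos' h1
  have hK1 : (0 : ℝ) < (K : ℝ) - 1 := by
    have : (2 : ℝ) ≤ (K : ℝ) := by exact_mod_cast hK
    linarith
  have hc : (0 : ℝ) < (1 / 2 : ℝ) *
      (((K : ℝ) - (k : ℝ)) / ((K : ℝ) - 1) + (if k = K then (1 : ℝ) else 0)) := by
    by_cases h : k = K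
    · simp [h]
    · have hlt : (k : ℝ) < (K : ℝ) := by exact_mod_cast lt_of_le_of_ne hkK h
      have := div_pos (sub_pos.mpr hlt) hK1
      simp only [h, if_false]
      linarith
  unfold II
  rw [hnext, hk]
  exact mul_lt_mul_of_pos_left (by linarith) hc
end

section
/- Let K ≥ 2 be an integer, let k ∈ {1, …, K} with k < K, and let θ = (θ_1, …, θ_K) and θ' = (θ'_1, …, θ'_K) be sorted probability vectors such that θ_k > θ'_k > 0, θ_1 = θ'_1, and θ_{k+1} = θ'_{k+1}. Then the inequality is strict: I_I(θ, k) > I_I(θ', k). -/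
open Finset

theorem II_strict_monotone_in_kth (K : ℕ) (hK : 2 ≤ K) (k : ℕ) (hk1 : 1 ≤ k) (hkK : k < K)
    (θ θ' : ℕ → ℝ) (hθ : SortedProbVec K θ) (hθ' : SortedProbVec K θ')
    (hk : θ' k < θ k) (hkpos : 0 < θ' k) (h1 : θ 1 = θ' 1)
    (hnext : θ (k + 1) = θ' (k + 1)) :
    II K θ k > II K θ' k := by
  have hne : k ≠ K := hkK.ne
  have hpos1 : 0 < θ' 1 := lt_of_lt_of_le hkpos (hθ'.1 1 k le_rfl hk1 hkK.le)
  have hn : 0 ≤ θ' (k + 1) := hθ'.2.1 (k + 1) (by omega) (by omega)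
  have hK' : (2 : ℝ) ≤ K := by exact_mod_cast hK
  have hkK' : (k : ℝ) < K := by exact_mod_cast hkK
  have hc : 0 < ((K : ℝ) - k) / ((K : ℝ) - 1) := div_pos (by linarith) (by linarith)
  have ha : θ' k / θ' 1 < θ k / θ' 1 := div_lt_div_of_pos_right hk hpos1
  have hb : θ' (k + 1) / θ k ≤ θ' (k + 1) / θ' k :=
    div_le_div_of_nonneg_left hn hkpos hk.le
  unfold II
  simp only [if_neg hne, h1, hnext, add_zero, gt_iff_lt]
  exact mul_lt_mul_of_pos_left (by linarith) (by positivity)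
end

section
/- Let K ≥ 2 be an integer, let k, k' ∈ {1, …, K} with k < k' < K, and let θ = (θ_1, …, θ_K) and θ' = (θ'_1, …, θ'_K) be sorted probability vectors such that θ_1 = θ'_1, θ_k = θ'_{k'} > 0, and θ_{k+1} = θ'_{k'+1}. Then the inequality is strict: I_I(θ, k) > I_I(θ', k'). -/
open Finset

theorem II_strict_antitone_in_index (K : ℕ) (hK : 2 ≤ K) (k k' : ℕ) (hk1 : 1 ≤ k)
    (hkk' : k < k') (hk'K : k' < K)
    (θ θ' : ℕ → ℝ) (hθ : SortedProbVec K θ) (hθ' : SortedProbVec K θ')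
    (h1 : θ 1 = θ' 1) (hk : θ k = θ' k') (hkpos : 0 < θ k)
    (hnext : θ (k + 1) = θ' (k' + 1)) :
    II K θ k > II K θ' k' := by 
  have hpos1 : 0 < θ 1 := lt_of_lt_of_le hkpos (hθ.1 1 k le_rfl hk1 (by omega))
  have hle : θ (k + 1) ≤ θ k := hθ.1 k (k + 1) hk1 (by omega) (by omega)
  have hr : θ (k + 1) / θ k ≤ 1 := (div_le_one hkpos).2 hle
  have hq : 0 < θ k / θ 1 := div_pos hkpos hpos1
  have hKr : (0 : ℝ) < (K : ℝ) - 1 := by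
    have : (2 : ℝ) ≤ (K : ℝ) := by exact_mod_cast hK
    linarith
  have hlt : ((K : ℝ) - (k' : ℝ)) / ((K : ℝ) - 1) < ((K : ℝ) - (k : ℝ)) / ((K : ℝ) - 1) := by
    have : (k : ℝ) < (k' : ℝ) := by exact_mod_cast hkk'
    exact div_lt_div_of_pos_right (by linarith) hKr
  have e1 : k ≠ K := by omega
  have e2 : k' ≠ K := by omega
  unfold II
  rw [if_neg e1, if_neg e1, if_neg e2, if_neg e2, ← hnext, ← hk, ← h1]
  apply mul_lt_mul_of_pos_right
  · linarith
  · linarith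
end
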